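/- arXiv:1804.11033 — 2 statements merged into one kernel-verified Lean document; each statement's English description precedes it below -/
import Mathlib

section
/- Let p = (f₁ ≤ … ≤ f_N) and q = (g₁ ≤ … ≤ g_M) be vertex patterns with N, M ≥ 3, entries ≥ 3, and positive combinatorial curvature (1 − N/2 + Σᵢ 1/fᵢ > 0 and 1 − M/2 + Σⱼ 1/gⱼ > 0). If p ≤_emb q then a_c(p) ≥ a_c(q). If moreover p <_emb q and K_{a_c(p)}(p) = 0, then a_c(p) > a_c(q). -/
/-- The angle defect `K_a(p) = 2π − Σᵢ 2·arcsin(cos(π/fᵢ)/cos(a/2))` of a vertex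
pattern given by `f : Fin N → ℕ`. -/
noncomputable def Kf {N : ℕ} (f : Fin N → ℕ) (a : ℝ) : ℝ :=
  2 * Real.pi - ∑ i, 2 * Real.arcsin (Real.cos (Real.pi / (f i : ℝ)) / Real.cos (a / 2))

/-- The critical side-length `a_c(p) = max{a ∈ [0, 2π/f_N] : K_a(p) ≥ 0}` of a
vertex pattern `f : Fin (N+1) → ℕ` (with last entry `f (Fin.last N)`). -/
noncomputable def ac {N : ℕ} (f : Fin (N + 1) → ℕ) : ℝ :=
  sSup {a : ℝ | a ∈ Set.Icc 0 (2 * Real.pi / (f (Fin.last N) : ℝ)) ∧ 0 ≤ Kf f a}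

/-!
The summand of `K_a` attached to an `n`-gon is the interior angle of a regular spherical `n`-gon
with side `a`, which increases strictly with `n`. Passing from `p` to a pattern `q` in which it
embeds therefore only adds to the angle sum, so `K_a(q) ≤ K_a(p)` wherever `K_a(q)` is defined.
Hence `a_c(q)`, which is admissible for `q` because the maximum is attained, is admissible for `p`.
If the embedding is strict, then `0 ≤ K_a(q) < K_a(p)` at `a = a_c(q)`, so `K_a(p)` cannot vanish
there and `a_c(q) ≠ a_c(p)`.
-/

open Finset Function Real Set

section Sums

variable {ι κ R : Type*} [Fintype ι] [Fintype κ] [AddCommMonoid R] [PartialOrder R]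
  {u : ι → R} {v : κ → R} {j : ι → κ}

lemma sum_le_sum_of_injective [IsOrderedAddMonoid R] (hj : Injective j)
    (huv : ∀ i, u i ≤ v (j i)) (hv : ∀ k, 0 ≤ v k) :
    ∑ i, u i ≤ ∑ k, v k :=
  calc
    ∑ i, u i ≤ ∑ i, v (j i) := sum_le_sum fun i _ => huv i
    _ = ∑ k ∈ univ.map ⟨j, hj⟩, v k := (sum_map univ ⟨j, hj⟩ v).symm
    _ ≤ ∑ k, v k := sum_le_sum_of_subset_of_nonneg (subset_univ _) fun k _ _ => hv k

lemma sum_lt_sum_of_injective [IsOrderedCancelAddMonoid R] (hj : Injective j)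
    (huv : ∀ i, u i ≤ v (j i)) (hv : ∀ k, 0 < v k)
    (hlt : Fintype.card ι < Fintype.card κ ∨ ∃ i, u i < v (j i)) :
    ∑ i, u i < ∑ k, v k := by
  rcases hlt with hcard | ⟨i, hi⟩
  · obtain ⟨k, hk⟩ : ∃ k, ∀ i, j i ≠ k := by
      simpa [Surjective] using mt (Fintype.card_le_of_surjective j) hcard.not_ge
    calc
      ∑ i, u i ≤ ∑ i, v (j i) := sum_le_sum fun i _ => huv i
      _ = ∑ k ∈ univ.map ⟨j, hj⟩, v k := (sum_map univ ⟨j, hj⟩ v).symm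
      _ < ∑ k, v k :=
        sum_lt_sum_of_subset (subset_univ _) (mem_univ k) (by simpa using hk) (hv k)
          fun k _ _ => (hv k).le
  · calc
      ∑ i, u i < ∑ i, v (j i) := sum_lt_sum (fun i _ => huv i) ⟨i, mem_univ i, hi⟩
      _ ≤ ∑ k, v k := sum_le_sum_of_injective hj (fun _ => le_rfl) fun k => (hv k).le

end Sums

lemma strictMonoOn_cos_pi_div : StrictMonoOn (fun x : ℝ => cos (π / x)) (Ici 1) := by
  intro x hx y _ hxy
  have hx0 : 0 < x := one_pos.trans_le hx
  have hy0 : 0 < y := hx0.trans hxy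
  exact cos_lt_cos_of_nonneg_of_le_pi (by positivity) (div_le_self pi_pos.le hx)
    (div_lt_div_of_pos_left pi_pos hx0 hxy)

section CornerAngle

/-- The interior angle of a regular spherical polygon with `x` sides of length `a`, solved from
`cos (π / x) = cos (a / 2) * sin (angle / 2)`. The number of sides is a real variable so that
monotonicity in it can be stated on intervals. -/
noncomputable def cornerAngle (x a : ℝ) : ℝ :=
  2 * arcsin (cos (π / x) / cos (a / 2))

lemma Kf_eq_sub_sum_cornerAngle {N : ℕ} (f : Fin N → ℕ) (a : ℝ) :
    Kf f a = 2 * π - ∑ i, cornerAngle (f i) a :=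
  rfl

lemma cornerAngle_zero_right {x : ℝ} (hx : 1 ≤ x) : cornerAngle x 0 = π - 2 * π * (1 / x) := by
  have harccos : arccos (cos (π / x)) = π / x :=
    arccos_cos (by positivity) (div_le_self pi_pos.le hx)
  rw [cornerAngle, zero_div, cos_zero, div_one, arcsin_eq_pi_div_two_sub_arccos, harccos]
  ring

lemma cornerAngle_two_left (a : ℝ) : cornerAngle 2 a = 0 := by
  simp [cornerAngle]

variable {y a : ℝ}

lemma cos_half_pos (hy : 2 < y) (ha : a ∈ Icc 0 (2 * π / y)) : 0 < cos (a / 2) := by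
  have hlt : 2 * π / y < π := by
    rw [div_lt_iff₀ (by linarith)]
    nlinarith [pi_pos]
  exact cos_pos_of_mem_Ioo ⟨by linarith [ha.1, pi_pos], by linarith [ha.2]⟩

lemma cos_pi_div_le_cos_half (hy : 1 ≤ y) (ha : a ∈ Icc 0 (2 * π / y)) :
    cos (π / y) ≤ cos (a / 2) := by
  have ha_half : a / 2 ≤ π / y := by
    rw [div_le_iff₀ two_pos]
    exact ha.2.trans_eq (by ring)
  exact cos_le_cos_of_nonneg_of_le_pi (by linarith [ha.1]) (div_le_self pi_pos.le hy) ha_half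

lemma strictMonoOn_cornerAngle (hy : 2 < y) (ha : a ∈ Icc 0 (2 * π / y)) :
    StrictMonoOn (cornerAngle · a) (Icc 2 y) := by
  have hcos : 0 < cos (a / 2) := cos_half_pos hy ha
  have hratio : StrictMonoOn (fun x : ℝ => cos (π / x) / cos (a / 2)) (Icc 2 y) :=
    fun x hx z hz hxz => div_lt_div_of_pos_right
      (strictMonoOn_cos_pi_div (one_le_two.trans hx.1) (one_le_two.trans hz.1) hxz) hcos
  have hratio_mem : MapsTo (fun x : ℝ => cos (π / x) / cos (a / 2)) (Icc 2 y) (Icc (-1) 1) := by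
    intro x hx
    have hlower := hratio.monotoneOn (left_mem_Icc.2 hy.le) hx hx.1
    have hupper := hratio.monotoneOn hx (right_mem_Icc.2 hy.le) hx.2
    simp only [cos_pi_div_two, zero_div] at hlower
    exact ⟨by linarith, hupper.trans <|
      (div_le_one hcos).2 (cos_pi_div_le_cos_half (by linarith) ha)⟩
  exact fun x hx z hz hxz => mul_lt_mul_of_pos_left
    (strictMonoOn_arcsin.comp hratio hratio_mem hx hz hxz) two_pos

lemma cornerAngle_nonneg (hy : 2 < y) (ha : a ∈ Icc 0 (2 * π / y)) {x : ℝ} (hx : x ∈ Icc 2 y) :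
    0 ≤ cornerAngle x a :=
  (cornerAngle_two_left a).ge.trans <|
    (strictMonoOn_cornerAngle hy ha).monotoneOn (left_mem_Icc.2 hy.le) hx hx.1

lemma cornerAngle_pos (hy : 2 < y) (ha : a ∈ Icc 0 (2 * π / y)) {x : ℝ} (hx : x ∈ Ioc 2 y) :
    0 < cornerAngle x a :=
  (cornerAngle_two_left a).ge.trans_lt <|
    strictMonoOn_cornerAngle hy ha (left_mem_Icc.2 hy.le) (Ioc_subset_Icc_self hx) hx.1

lemma continuousOn_cornerAngle (x : ℝ) (hy : 2 < y) :
    ContinuousOn (cornerAngle x) (Icc 0 (2 * π / y)) :=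
  continuousOn_const.mul <| continuous_arcsin.comp_continuousOn <|
    continuousOn_const.div (by fun_prop) fun _ ha => (cos_half_pos hy ha).ne'

end CornerAngle

section Defect

variable {N M : ℕ} {f : Fin N → ℕ} {g : Fin M → ℕ} {j : Fin N → Fin M} {y a : ℝ}

lemma Kf_zero (hf : ∀ i, 1 ≤ f i) :
    Kf f 0 = 2 * π * (1 - (N : ℝ) / 2 + ∑ i, (1 : ℝ) / (f i : ℝ)) := by
  have hangle (i : Fin N) : cornerAngle (f i) 0 = π - 2 * π * (1 / (f i : ℝ)) :=
    cornerAngle_zero_right (by exact_mod_cast hf i)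
  simp only [Kf_eq_sub_sum_cornerAngle, hangle, sum_sub_distrib, ← mul_sum, sum_const, card_univ,
    Fintype.card_fin, nsmul_eq_mul]
  ring

lemma continuousOn_Kf (f : Fin N → ℕ) (hy : 2 < y) : ContinuousOn (Kf f) (Icc 0 (2 * π / y)) :=
  continuousOn_const.sub <| continuousOn_finsetSum _ fun i _ => continuousOn_cornerAngle (f i) hy

lemma Kf_le_Kf_of_embedding (hy : 2 < y) (ha : a ∈ Icc 0 (2 * π / y))
    (hf : ∀ i, 2 ≤ f i) (hg : ∀ k, (g k : ℝ) ∈ Icc 2 y)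
    (hj : Injective j) (hemb : ∀ i, f i ≤ g (j i)) : Kf g a ≤ Kf f a := by
  have hangle (i : Fin N) : cornerAngle (f i) a ≤ cornerAngle (g (j i)) a := by
    have hle : (f i : ℝ) ≤ g (j i) := by exact_mod_cast hemb i
    exact (strictMonoOn_cornerAngle hy ha).monotoneOn
      ⟨by exact_mod_cast hf i, hle.trans (hg _).2⟩ (hg _) hle
  exact sub_le_sub_left
    (sum_le_sum_of_injective hj hangle fun k => cornerAngle_nonneg hy ha (hg k)) _

lemma Kf_lt_Kf_of_embedding (hy : 2 < y) (ha : a ∈ Icc 0 (2 * π / y))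
    (hf : ∀ i, 2 ≤ f i) (hg : ∀ k, (g k : ℝ) ∈ Ioc 2 y)
    (hj : Injective j) (hemb : ∀ i, f i ≤ g (j i)) (hstrict : N < M ∨ ∃ i, f i < g (j i)) :
    Kf g a < Kf f a := by
  have hmono := strictMonoOn_cornerAngle hy ha
  have hg_mem (i : Fin N) : (g (j i) : ℝ) ∈ Icc 2 y := Ioc_subset_Icc_self (hg _)
  have hf_mem (i : Fin N) : (f i : ℝ) ∈ Icc 2 y :=
    ⟨by exact_mod_cast hf i, le_trans (by exact_mod_cast hemb i) (hg_mem i).2⟩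
  have hangle (i : Fin N) : cornerAngle (f i) a ≤ cornerAngle (g (j i)) a :=
    hmono.monotoneOn (hf_mem i) (hg_mem i) (by exact_mod_cast hemb i)
  have hangle_strict : Fintype.card (Fin N) < Fintype.card (Fin M) ∨
      ∃ i, cornerAngle (f i) a < cornerAngle (g (j i)) a := by
    simp only [Fintype.card_fin]
    exact hstrict.imp_right fun ⟨i, hi⟩ =>
      ⟨i, hmono (hf_mem i) (hg_mem i) (by exact_mod_cast hi)⟩
  exact sub_lt_sub_left
    (sum_lt_sum_of_injective hj hangle (fun k => cornerAngle_pos hy ha (hg k)) hangle_strict) _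

end Defect

section CriticalSideLength

variable {N M : ℕ} {f : Fin (N + 1) → ℕ} {g : Fin (M + 1) → ℕ} {j : Fin (N + 1) → Fin (M + 1)}

/-- The set of side-lengths over which `ac` takes its supremum: those in `[0, 2π/f_N]` at which the
pattern has nonnegative angle defect. -/
def admissibleSides (f : Fin (N + 1) → ℕ) : Set ℝ :=
  {a | a ∈ Icc 0 (2 * π / (f (Fin.last N) : ℝ)) ∧ 0 ≤ Kf f a}

lemma le_ac {a : ℝ} (ha : a ∈ admissibleSides f) : a ≤ ac f :=
  le_csSup ⟨_, fun _ hb => hb.1.2⟩ ha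

lemma isCompact_admissibleSides (hlast : 2 < f (Fin.last N)) : IsCompact (admissibleSides f) :=
  isCompact_Icc.of_isClosed_subset
    ((continuousOn_Kf f (by exact_mod_cast hlast)).preimage_isClosed_of_isClosed
      isClosed_Icc isClosed_Ici)
    fun _ ha => ha.1

lemma zero_mem_admissibleSides (hf : ∀ i, 1 ≤ f i)
    (hcurv : 0 ≤ 1 - ((N : ℝ) + 1) / 2 + ∑ i, (1 : ℝ) / (f i : ℝ)) :
    0 ∈ admissibleSides f := by
  refine ⟨⟨le_rfl, by positivity⟩, ?_⟩
  rw [Kf_zero hf]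
  push_cast
  positivity

lemma ac_mem_admissibleSides (hf : ∀ i, 1 ≤ f i) (hlast : 2 < f (Fin.last N))
    (hcurv : 0 ≤ 1 - ((N : ℝ) + 1) / 2 + ∑ i, (1 : ℝ) / (f i : ℝ)) :
    ac f ∈ admissibleSides f :=
  (isCompact_admissibleSides hlast).sSup_mem ⟨0, zero_mem_admissibleSides hf hcurv⟩

lemma admissibleSides_subset_of_embedding (hgmax : ∀ k, g k ≤ g (Fin.last M))
    (hf : ∀ i, 2 ≤ f i) (hg : ∀ k, 2 ≤ g k) (hlast : 2 < g (Fin.last M))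
    (hj : Injective j) (hemb : ∀ i, f i ≤ g (j i)) :
    admissibleSides g ⊆ admissibleSides f := by
  rintro a ⟨ha, hK⟩
  have hf_last_pos : (0 : ℝ) < f (Fin.last N) := by exact_mod_cast two_pos.trans_le (hf _)
  have hlast_le : (f (Fin.last N) : ℝ) ≤ g (Fin.last M) := by
    exact_mod_cast (hemb _).trans (hgmax _)
  refine ⟨⟨ha.1, ha.2.trans (by gcongr)⟩, hK.trans ?_⟩
  exact Kf_le_Kf_of_embedding (by exact_mod_cast hlast) ha hf
    (fun k => ⟨by exact_mod_cast hg k, by exact_mod_cast hgmax k⟩) hj hemb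

theorem stmt4_general (hgmax : ∀ k, g k ≤ g (Fin.last M))
    (hf : ∀ i, 2 ≤ f i) (hg : ∀ k, 3 ≤ g k)
    (hgcurv : 0 ≤ 1 - ((M : ℝ) + 1) / 2 + ∑ k, (1 : ℝ) / (g k : ℝ))
    (hj : Injective j) (hemb : ∀ i, f i ≤ g (j i)) :
    ac g ≤ ac f ∧
      ((N < M ∨ ∃ i, f i < g (j i)) → Kf f (ac f) = 0 → ac g < ac f) := by
  have hmem : ac g ∈ admissibleSides g :=
    ac_mem_admissibleSides (fun k => le_trans (by norm_num) (hg k)) (hg _) hgcurv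
  have hle : ac g ≤ ac f := le_ac <|
    admissibleSides_subset_of_embedding hgmax hf (fun k => (Nat.le_succ 2).trans (hg k)) (hg _)
      hj hemb hmem
  refine ⟨hle, fun hstrict hK => hle.lt_of_ne fun heq => ?_⟩
  have hlt : Kf g (ac g) < Kf f (ac g) :=
    Kf_lt_Kf_of_embedding (by exact_mod_cast hg (Fin.last M)) hmem.1 hf
      (fun k => ⟨by exact_mod_cast hg k, by exact_mod_cast hgmax k⟩) hj hemb
      (hstrict.imp_left Nat.succ_lt_succ)
  rw [heq, hK, ← heq] at hlt
  exact hlt.not_ge hmem.2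

end CriticalSideLength

/-- Let `p` and `q` be vertex patterns (lengths `≥ 3`, entries `≥ 3`, positive
combinatorial curvature).  If `p ≤_emb q` then `a_c(p) ≥ a_c(q)`.  If moreover
`p <_emb q` and `K_{a_c(p)}(p) = 0`, then `a_c(p) > a_c(q)`. -/
theorem stmt4 (N M : ℕ) (hN : 2 ≤ N) (hM : 2 ≤ M)
    (f : Fin (N + 1) → ℕ) (g : Fin (M + 1) → ℕ)
    (hfmono : Monotone f) (hgmono : Monotone g)
    (hf3 : ∀ i, 3 ≤ f i) (hg3 : ∀ i, 3 ≤ g i)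
    (hfcurv : 0 < 1 - ((N : ℝ) + 1) / 2 + ∑ i, (1 : ℝ) / (f i : ℝ))
    (hgcurv : 0 < 1 - ((M : ℝ) + 1) / 2 + ∑ i, (1 : ℝ) / (g i : ℝ))
    (j : Fin (N + 1) → Fin (M + 1)) (hj : StrictMono j)
    (hemb : ∀ i, f i ≤ g (j i)) :
    ac g ≤ ac f ∧
      ((N < M ∨ ∃ i, f i < g (j i)) → Kf f (ac f) = 0 → ac g < ac f) := 
  stmt4_general (fun k => hgmono (Fin.le_last k)) (fun i => (Nat.le_succ 2).trans (hf3 i)) hg3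
    hgcurv.le hj.injective hemb
end

section
/- Let f₁, f₂, f₃ be integers with 3 ≤ f₁ ≤ f₂ ≤ f₃. Then K_{2π/f₃}((f₁,f₂,f₃)) = π − 2·arcsin(cos(π/f₁)/cos(π/f₃)) − 2·arcsin(cos(π/f₂)/cos(π/f₃)), and this quantity is negative if and only if cos²(π/f₁) + cos²(π/f₂) > cos²(π/f₃), positive if and only if cos²(π/f₁) + cos²(π/f₂) < cos²(π/f₃), and zero if and only if cos²(π/f₁) + cos²(π/f₂) = cos²(π/f₃). -/
/-- The angle defect `K_a(p) = 2π − Σ_{f ∈ p} 2·arcsin(cos(π/f)/cos(a/2))` of a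
vertex pattern given as a list. -/
noncomputable def K (p : List ℕ) (a : ℝ) : ℝ :=
  2 * Real.pi -
    (p.map (fun f => 2 * Real.arcsin (Real.cos (Real.pi / (f : ℝ)) / Real.cos (a / 2)))).sum

/-!
At `a = 2π/f₃` the largest face contributes `2 arcsin 1 = π` to the angle sum, so the sign of the
defect compares `arcsin x + arcsin y` with `π/2`, where `x, y ∈ [0, 1]` are the cosine ratios of the
two other faces. Since `π/2 - arcsin y = arcsin √(1 - y²)` and `arcsin` is increasing, this amounts
to comparing `x` with `√(1 - y²)`, that is, `x² + y²` with `1`.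
-/

section

open Real Set

theorem cmp_sqrt_right {x y : ℝ} (hx : 0 ≤ x) (hy : 0 ≤ y) : cmp x √y = cmp (x ^ 2) y := by
  rw [← (pow_left_strictMonoOn₀ two_ne_zero).cmp_map_eq hx (sqrt_nonneg y), sq_sqrt hy]

theorem cmp_arcsin_add_arcsin_pi_div_two {x y : ℝ} (hx : x ∈ Icc 0 1) (hy : y ∈ Icc 0 1) :
    cmp (arcsin x + arcsin y) (π / 2) = cmp (x ^ 2 + y ^ 2) 1 := by
  have hx' : x ∈ Icc (-1) 1 := ⟨neg_one_lt_zero.le.trans hx.1, hx.2⟩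
  have hsqrt : √(1 - y ^ 2) ∈ Icc (-1) 1 :=
    ⟨neg_one_lt_zero.le.trans (sqrt_nonneg _), sqrt_le_one.2 (sub_le_self 1 (sq_nonneg y))⟩
  have hy_sq : 0 ≤ 1 - y ^ 2 := sub_nonneg.2 (pow_le_one₀ hy.1 hy.2)
  calc cmp (arcsin x + arcsin y) (π / 2)
    _ = cmp (arcsin x) (arccos y) := by
      rw [arccos, ← cmp_add_right _ (π / 2 - arcsin y) (arcsin y), sub_add_cancel]
    _ = cmp x √(1 - y ^ 2) := by
      rw [arccos_eq_arcsin hy.1, strictMonoOn_arcsin.cmp_map_eq hx' hsqrt]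
    _ = cmp (x ^ 2) (1 - y ^ 2) := cmp_sqrt_right hx.1 hy_sq
    _ = cmp (x ^ 2 + y ^ 2) 1 := by
      rw [← cmp_add_right _ _ (y ^ 2), sub_add_cancel]

theorem cmp_arcsin_div_add_arcsin_div_pi_div_two {a b c : ℝ} (hc : 0 < c) (ha : a ∈ Icc 0 c)
    (hb : b ∈ Icc 0 c) :
    cmp (arcsin (a / c) + arcsin (b / c)) (π / 2) = cmp (a ^ 2 + b ^ 2) (c ^ 2) := by
  have hdiv_mem : ∀ {x}, x ∈ Icc 0 c → x / c ∈ Icc 0 1 := fun hx =>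
    ⟨div_nonneg hx.1 hc.le, (div_le_one hc).2 hx.2⟩
  have hc_sq : 0 < c ^ 2 := pow_pos hc 2
  rw [cmp_arcsin_add_arcsin_pi_div_two (hdiv_mem ha) (hdiv_mem hb), ← cmp_mul_pos_right hc_sq,
    div_pow, div_pow, ← add_div, div_mul_cancel₀ _ hc_sq.ne', one_mul]

theorem cos_pi_div_pos {x : ℝ} (hx : 2 < x) : 0 < cos (π / x) := by
  have h_nonneg : 0 ≤ π / x := by positivity
  have h_lt : π / x < π / 2 := div_lt_div_of_pos_left pi_pos two_pos hx
  exact cos_pos_of_mem_Ioo ⟨by linarith [pi_pos], h_lt⟩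

theorem cos_pi_div_le_cos_pi_div {x y : ℝ} (hx : 1 ≤ x) (hxy : x ≤ y) :
    cos (π / x) ≤ cos (π / y) :=
  cos_le_cos_of_nonneg_of_le_pi (div_nonneg pi_pos.le (zero_le_one.trans (hx.trans hxy)))
    (div_le_self pi_pos.le hx)
    (div_le_div_of_nonneg_left pi_pos.le (zero_lt_one.trans_le hx) hxy)

-- `K` as elaborated maps over `p` coerced to a `List ℝ` by a monadic lift; here the cast is inside.
theorem K_eq_two_pi_sub_sum_map (p : List ℕ) (a : ℝ) :
    K p a = 2 * π - (p.map fun f : ℕ => 2 * arcsin (cos (π / f) / cos (a / 2))).sum := by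
  simp only [K, bind_pure_comp, List.map_eq_map, List.map_map, Function.comp_def]

theorem K_append_singleton_two_pi_div (p : List ℕ) {f : ℕ} (hf : cos (π / f) ≠ 0) :
    K (p ++ [f]) (2 * π / f) =
      π - (p.map fun g : ℕ => 2 * arcsin (cos (π / g) / cos (π / f))).sum := by
  have h_half_angle : 2 * π / f / 2 = π / f := by ring
  simp only [K_eq_two_pi_sub_sum_map, h_half_angle, List.map_append, List.sum_append,
    List.map_singleton, List.sum_singleton, div_self hf, arcsin_one]
  ring

theorem K_triple_two_pi_div (f₁ f₂ : ℕ) {f₃ : ℕ} (hf : cos (π / f₃) ≠ 0) :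
    K [f₁, f₂, f₃] (2 * π / f₃) =
      π - 2 * arcsin (cos (π / f₁) / cos (π / f₃)) - 2 * arcsin (cos (π / f₂) / cos (π / f₃)) := by
  simpa [sub_sub] using K_append_singleton_two_pi_div [f₁, f₂] hf

theorem cmp_K_triple_two_pi_div_zero {f₁ f₂ f₃ : ℕ} (hf₁ : 2 < f₁) (hf₂ : 2 < f₂)
    (hf₁₃ : f₁ ≤ f₃) (hf₂₃ : f₂ ≤ f₃) :
    cmp (K [f₁, f₂, f₃] (2 * π / f₃)) 0 =
      cmp (cos (π / f₃) ^ 2) (cos (π / f₁) ^ 2 + cos (π / f₂) ^ 2) := by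
  have hcos_pos : ∀ {f : ℕ}, 2 < f → 0 < cos (π / f) := fun hf =>
    cos_pi_div_pos (by exact_mod_cast hf)
  have hcos_mem : ∀ {f : ℕ}, 2 < f → f ≤ f₃ → cos (π / f) ∈ Icc 0 (cos (π / f₃)) :=
    fun hf hf₃ => ⟨(hcos_pos hf).le,
      cos_pi_div_le_cos_pi_div (by exact_mod_cast one_lt_two.le.trans hf.le)
        (by exact_mod_cast hf₃)⟩
  have hc : 0 < cos (π / f₃) := hcos_pos (hf₁.trans_le hf₁₃)
  set S := arcsin (cos (π / f₁) / cos (π / f₃)) + arcsin (cos (π / f₂) / cos (π / f₃)) with hS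
  have hK : K [f₁, f₂, f₃] (2 * π / f₃) = 2 * (π / 2 - S) := by
    rw [K_triple_two_pi_div f₁ f₂ hc.ne', hS]
    ring
  calc cmp (K [f₁, f₂, f₃] (2 * π / f₃)) 0
    _ = cmp (2 * (π / 2 - S)) (2 * 0) := by rw [hK, mul_zero]
    _ = cmp (π / 2) S := by rw [cmp_mul_pos_left two_pos, cmp_sub_zero]
    _ = cmp (cos (π / f₃) ^ 2) (cos (π / f₁) ^ 2 + cos (π / f₂) ^ 2) :=
      cmp_eq_cmp_symm.1 <| cmp_arcsin_div_add_arcsin_div_pi_div_two hc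
        (hcos_mem hf₁ hf₁₃) (hcos_mem hf₂ hf₂₃)

end

/-- Let `3 ≤ f₁ ≤ f₂ ≤ f₃`.  Then
`K_{2π/f₃}((f₁,f₂,f₃)) = π − 2·arcsin(cos(π/f₁)/cos(π/f₃)) − 2·arcsin(cos(π/f₂)/cos(π/f₃))`,
and this quantity is negative iff `cos²(π/f₁) + cos²(π/f₂) > cos²(π/f₃)`, positive iff
`<`, and zero iff `=`. -/
theorem stmt6 (f1 f2 f3 : ℕ) (h1 : 3 ≤ f1) (h12 : f1 ≤ f2) (h23 : f2 ≤ f3) :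
    K [f1, f2, f3] (2 * Real.pi / (f3 : ℝ)) =
      Real.pi - 2 * Real.arcsin (Real.cos (Real.pi / (f1 : ℝ)) / Real.cos (Real.pi / (f3 : ℝ)))
        - 2 * Real.arcsin (Real.cos (Real.pi / (f2 : ℝ)) / Real.cos (Real.pi / (f3 : ℝ))) ∧
    (K [f1, f2, f3] (2 * Real.pi / (f3 : ℝ)) < 0 ↔
      Real.cos (Real.pi / (f3 : ℝ)) ^ 2 <
        Real.cos (Real.pi / (f1 : ℝ)) ^ 2 + Real.cos (Real.pi / (f2 : ℝ)) ^ 2) ∧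
    (0 < K [f1, f2, f3] (2 * Real.pi / (f3 : ℝ)) ↔
      Real.cos (Real.pi / (f1 : ℝ)) ^ 2 + Real.cos (Real.pi / (f2 : ℝ)) ^ 2 <
        Real.cos (Real.pi / (f3 : ℝ)) ^ 2) ∧
    (K [f1, f2, f3] (2 * Real.pi / (f3 : ℝ)) = 0 ↔
      Real.cos (Real.pi / (f1 : ℝ)) ^ 2 + Real.cos (Real.pi / (f2 : ℝ)) ^ 2 =
        Real.cos (Real.pi / (f3 : ℝ)) ^ 2) := by
  have hf₃ : (2 : ℝ) < f3 := by exact_mod_cast h1.trans (h12.trans h23)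
  have hcmp := cmp_K_triple_two_pi_div_zero h1 (h1.trans h12) (h12.trans h23) h23
  exact ⟨K_triple_two_pi_div f1 f2 (cos_pi_div_pos hf₃).ne',
    lt_iff_lt_of_cmp_eq_cmp hcmp,
    lt_iff_lt_of_cmp_eq_cmp (cmp_eq_cmp_symm.1 hcmp),
    (eq_iff_eq_of_cmp_eq_cmp hcmp).trans eq_comm⟩
end
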